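/- Let A be a ring satisfying the minimum condition on principal left ideals (i.e., A is right perfect). Then every distributive right A-module is a completely cyclic Noetherian module. -/

import Mathlib

/-!
The argument is the classical one for right perfect rings. Let `J` be the Jacobson radical of `A`.

* `A ⧸ J` is semisimple (`isSemisimpleModule_quotient_jacobson`): among the `a` with `1 - a` in the
  preimage of the socle of `A ⧸ J`, one with `A a` minimal lies in `J`.
* `J` is T-nilpotent, hence a right module `Q` with `Q J = Q` vanishes
  (`subsingleton_of_smul_top_eq_top`), and a generator of `M ⧸ M J` lifts to a generator of `M`.
* If `D` is distributive and `X = xR`, `Y = yR` are disjoint with `y ≠ 0`, then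
  `ann x ⊄ ann y` (otherwise the graph `(x + y)R` would violate distributivity), so
  `ann (x + y) = ann x ∩ ann y` is strictly smaller than `ann x`. Therefore an `x` with minimal
  annihilator generates an essential submodule, which is everything when `D` is semisimple.
  Since `A ⧸ J` is right Artinian, this applies to `D = M ⧸ M J`.

Hence every distributive right module is cyclic. Submodules of distributive modules are
distributive, so all of them are cyclic, and Noetherianity follows.

Right `A`-modules are handled as left modules over `R = Aᵐᵒᵖ`.
-/

universe u

open Submodule

/-- A module `M` is `ℵ₀`-distributive if no subfactor of `M` (quotient of a submodule)
is (isomorphic to) a direct sum of infinitely many pairwise isomorphic simple modules.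
The direct sum condition is phrased internally: the subfactor has no independent spanning
family, indexed by an infinite type, of pairwise isomorphic simple submodules. -/
def IsAleph0Distributive (R M : Type u) [Ring R] [AddCommGroup M] [Module R M] : Prop :=
  ¬ ∃ (N : Submodule R M) (P : Submodule R N) (ι : Type u) (_ : Infinite ι)
      (T : ι → Submodule R (N ⧸ P)),
      iSupIndep T ∧ iSup T = ⊤ ∧ (∀ i, IsSimpleModule R (T i)) ∧
        ∀ i j, Nonempty ((T i) ≃ₗ[R] (T j))

/-- A module is distributive if its lattice of submodules is distributive. -/
def IsDistributiveModule (R M : Type u) [Ring R] [AddCommGroup M] [Module R M] : Prop :=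
  ∀ X Y Z : Submodule R M, X ⊓ (Y ⊔ Z) = X ⊓ Y ⊔ X ⊓ Z

/-- A module is completely cyclic if every submodule is cyclic. -/
def IsCompletelyCyclic (R M : Type u) [Ring R] [AddCommGroup M] [Module R M] : Prop :=
  ∀ N : Submodule R M, ∃ m : M, N = span R {m}

/-- A module is Bezout if every finitely generated submodule is cyclic. -/
def IsBezoutModule (R M : Type u) [Ring R] [AddCommGroup M] [Module R M] : Prop :=
  ∀ N : Submodule R M, N.FG → ∃ m : M, N = span R {m}

/-- A ring satisfies the minimum condition on principal right ideals if there is no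
infinite strictly descending chain of principal right ideals. -/
def MinPrincipalRight (A : Type u) [Ring A] : Prop :=
  ¬ ∃ a : ℕ → A, StrictAnti fun n => span Aᵐᵒᵖ ({a n} : Set A)

/-- A ring satisfies the minimum condition on principal left ideals if there is no
infinite strictly descending chain of principal left ideals. -/
def MinPrincipalLeft (A : Type u) [Ring A] : Prop :=
  ¬ ∃ a : ℕ → A, StrictAnti fun n => span A ({a n} : Set A)

/-- A module is indecomposable if it is nonzero and is not the direct sum of two
nonzero submodules. -/
def IsIndecomposableModule (R M : Type u) [Ring R] [AddCommGroup M] [Module R M] : Prop :=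
  Nontrivial M ∧ ∀ N P : Submodule R M, IsCompl N P → N = ⊥ ∨ P = ⊥

/-- A ring `A` has (right) finite representation type if it is right Artinian and has,
up to isomorphism, only finitely many finitely generated indecomposable right modules
(every finitely generated module is isomorphic to a quotient of some `Aⁿ`, so the
representatives may be taken of this form). -/
def HasFiniteRepresentationType (A : Type u) [Ring A] : Prop :=
  IsArtinian Aᵐᵒᵖ A ∧
    ∃ (n : ℕ) (k : Fin n → ℕ) (N : ∀ i, Submodule Aᵐᵒᵖ (Fin (k i) → A)),
      ∀ (M : Type u) [AddCommGroup M] [Module Aᵐᵒᵖ M],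
        Module.Finite Aᵐᵒᵖ M → IsIndecomposableModule Aᵐᵒᵖ M →
          ∃ i, Nonempty (M ≃ₗ[Aᵐᵒᵖ] ((Fin (k i) → A) ⧸ N i))

/-- `M` has only finitely many simple subfactors up to isomorphism. -/
def FinitelyManySimpleSubfactors (R M : Type u) [Ring R] [AddCommGroup M] [Module R M] : Prop :=
  ∃ (n : ℕ) (N : Fin n → Submodule R M) (P : ∀ i, Submodule R (N i)),
    ∀ (N' : Submodule R M) (P' : Submodule R N'), IsSimpleModule R (N' ⧸ P') →
      ∃ i, Nonempty ((N' ⧸ P') ≃ₗ[R] (N i ⧸ P i))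

/-- A module is semi-Artinian if every nonzero quotient module contains a simple submodule. -/
def IsSemiArtinianModule (R M : Type u) [Ring R] [AddCommGroup M] [Module R M] : Prop :=
  ∀ N : Submodule R M, N ≠ ⊤ → ∃ S : Submodule R (M ⧸ N), IsSimpleModule R S

/-- A ring is semilocal if its quotient by the Jacobson radical is semisimple. -/
def IsSemilocalRing (A : Type u) [Ring A] : Prop :=
  IsSemisimpleModule A (A ⧸ Ideal.jacobson (⊥ : Ideal A))

/-- A ring is semiprimary if it is semilocal and its Jacobson radical is nilpotent. -/
def IsSemiprimaryRing' (A : Type u) [Ring A] : Prop :=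
  IsSemilocalRing A ∧ ∃ n : ℕ, 0 < n ∧ ∀ f : Fin n → A,
    (∀ i, f i ∈ Ideal.jacobson (⊥ : Ideal A)) → (List.ofFn f).prod = 0

section Perfect

variable {A : Type u} [Ring A]

/-- The descending chain condition on principal left ideals in the form of a minimality
principle. -/
lemma MinPrincipalLeft.exists_minimal (hA : MinPrincipalLeft A) (S : Set A) (hS : S.Nonempty) :
    ∃ a ∈ S, ∀ b ∈ S, b ∈ span A {a} → a ∈ span A {b} := by
  by_contra! h
  choose! f hfS hf hf' using h
  obtain ⟨s, hs⟩ := hS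
  have hmem : ∀ n, f^[n] s ∈ S := by
    intro n
    induction n with
    | zero => exact hs
    | succ n ih => rw [Function.iterate_succ_apply']; exact hfS _ ih
  refine hA ⟨fun n => f^[n] s, strictAnti_nat_of_succ_lt fun n => ?_⟩
  simp only [Function.iterate_succ_apply']
  refine lt_of_le_of_ne ((span_singleton_le_iff_mem _ _).2 (hf _ (hmem n))) fun h => ?_
  exact hf' _ (hmem n) (h ▸ mem_span_singleton_self _)

/-- This is the semisimplicity of the ring `A ⧸ J`, stated over `A` so that the minimality
principle for principal left ideals of `A` applies directly. -/
lemma isSemisimpleModule_quotient_jacobson (hA : MinPrincipalLeft A) :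
    IsSemisimpleModule A (A ⧸ Ring.jacobson A) := by
  set J := Ring.jacobson A with hJ
  have hmk : ∀ z, J.mkQ z = 0 ↔ z ∈ J := fun z => Submodule.Quotient.mk_eq_zero J
  set soc : Submodule A (A ⧸ J) := sSup {m | IsSimpleModule A m} with hsoc
  obtain ⟨a, ha, hmin⟩ := hA.exists_minimal {a | J.mkQ (1 - a) ∈ soc} ⟨1, by simp⟩
  -- otherwise subtracting from `a` its component in a simple submodule of `A a` modulo `J`
  -- produces an element contradicting minimality
  have haJ : a ∈ J := by
    by_contra haJ
    obtain ⟨b, ⟨hba, hbJ⟩, hbmin⟩ := hA.exists_minimal {b | b ∈ span A {a} ∧ b ∉ J}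
      ⟨a, mem_span_singleton_self _, haJ⟩
    have hsimple : IsSimpleModule A (span A {J.mkQ b}) := by
      rw [isSimpleModule_iff_isAtom]
      refine ⟨fun h => hbJ ?_, fun N hN => ?_⟩
      · rw [span_singleton_eq_bot] at h
        exact (hmk b).1 h
      · by_contra hne
        obtain ⟨z, hz, hz0⟩ := N.ne_bot_iff.1 hne
        obtain ⟨r, rfl⟩ := mem_span_singleton.1 (hN.le hz)
        have h1 : r • b ∉ J := fun h => hz0 (by
          rw [← map_smul]; exact (hmk _).2 h)
        have h2 := hbmin (r • b) ⟨smul_mem _ _ hba, h1⟩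
          (smul_mem _ _ (mem_span_singleton_self _))
        obtain ⟨s, hs⟩ := mem_span_singleton.1 h2
        refine hN.not_ge ((span_singleton_le_iff_mem _ _).2 ?_)
        rw [← hs, map_smul, map_smul]
        exact smul_mem _ _ hz
    have hb_soc : J.mkQ b ∈ soc :=
      le_sSup (a := span A {J.mkQ b}) hsimple (mem_span_singleton_self _)
    -- a maximal left ideal avoiding `b` is a complement of `A b` modulo `J`
    obtain ⟨m, hm, hbm⟩ : ∃ m : Ideal A, m.IsMaximal ∧ b ∉ m := by
      rw [hJ, Ring.jacobson_eq_sInf_isMaximal, Submodule.mem_sInf] at hbJ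
      push Not at hbJ
      exact hbJ
    obtain ⟨r, rfl⟩ := mem_span_singleton.1 hba
    have htop : span A {r • a} ⊔ m = ⊤ := by
      rw [sup_comm]
      refine hm.1.2 _ (lt_of_le_of_ne le_sup_left fun h => hbm ?_)
      rw [h]
      exact mem_sup_right (mem_span_singleton_self _)
    obtain ⟨y, hy, k, hk, hyk⟩ := mem_sup.1 (htop ▸ mem_top : a ∈ span A {r • a} ⊔ m)
    obtain ⟨s, rfl⟩ := mem_span_singleton.1 hy
    have hk' : k = a - s • r • a := eq_sub_of_add_eq' hyk
    have hkS : J.mkQ (1 - k) ∈ soc := by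
      have : (1 : A) - k = (1 - a) + s • r • a := by rw [hk']; abel
      rw [this, map_add]
      refine add_mem ha ?_
      rw [map_smul]
      exact smul_mem _ _ hb_soc
    have hka : k ∈ span A {a} := by
      rw [hk']
      exact sub_mem (mem_span_singleton_self _)
        (smul_mem _ _ (smul_mem _ _ (mem_span_singleton_self _)))
    have ham : a ∈ m := (span_singleton_le_iff_mem _ _).2 hk (hmin k hkS hka)
    exact hbm (smul_mem _ _ ham)
  have h1 : J.mkQ 1 ∈ soc := by
    have : J.mkQ (1 - a) = J.mkQ 1 := by
      rw [map_sub, sub_eq_self]; exact (hmk a).2 haJ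
    exact this ▸ ha
  refine .of_sSup_simples_eq_top ?_
  rw [eq_top_iff]
  rintro x -
  obtain ⟨r, rfl⟩ := J.mkQ_surjective x
  have : J.mkQ r = r • J.mkQ 1 := by rw [← map_smul, smul_eq_mul, mul_one]
  rw [this]
  exact smul_mem _ _ h1

/-- The Jacobson radical of `A`, as an ideal of the opposite ring. -/
def opJacobson (A : Type u) [Ring A] : Ideal Aᵐᵒᵖ :=
  RingHom.ker (Ideal.Quotient.mk (Ring.jacobson A)).op

instance : (opJacobson A).IsTwoSided := by
  unfold opJacobson; infer_instance

lemma op_mem_opJacobson {a : A} : MulOpposite.op a ∈ opJacobson A ↔ a ∈ Ring.jacobson A := by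
  rw [opJacobson, RingHom.mem_ker, ← Ideal.Quotient.eq_zero_iff_mem]
  exact MulOpposite.op_eq_zero_iff _

lemma isSemisimpleRing_quotient_opJacobson (hA : MinPrincipalLeft A) :
    IsSemisimpleRing (Aᵐᵒᵖ ⧸ opJacobson A) := by
  have h1 := isSemisimpleModule_quotient_jacobson hA
  have h2 : IsSemisimpleRing (A ⧸ Ring.jacobson A) := by
    let l : (A ⧸ Ring.jacobson A) →ₛₗ[Ideal.Quotient.mk (Ring.jacobson A)]
        (A ⧸ Ring.jacobson A) :=
      { toFun := id
        map_add' := fun _ _ => rfl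
        map_smul' := by rintro a ⟨b⟩; rfl }
    exact (l.isSemisimpleModule_iff_of_bijective Function.bijective_id).1 h1
  have hsurj : Function.Surjective (Ideal.Quotient.mk (Ring.jacobson A)).op := by
    intro x
    obtain ⟨a, ha⟩ := Ideal.Quotient.mk_surjective x.unop
    exact ⟨MulOpposite.op a, MulOpposite.unop_injective ha⟩
  exact (RingHom.quotientKerEquivOfSurjective hsurj).symm.isSemisimpleRing

/-- Nakayama's lemma for arbitrary right modules over a right perfect ring. -/
lemma subsingleton_of_smul_top_eq_top (hA : MinPrincipalLeft A)
    (Q : Type u) [AddCommGroup Q] [Module Aᵐᵒᵖ Q]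
    (hQ : opJacobson A • (⊤ : Submodule Aᵐᵒᵖ Q) = ⊤) : Subsingleton Q := by
  by_contra hns
  rw [not_subsingleton_iff_nontrivial] at hns
  obtain ⟨x₀, hx₀⟩ := exists_ne (0 : Q)
  obtain ⟨a, ⟨x, hx⟩, hmin⟩ := hA.exists_minimal {a | ∃ x : Q, MulOpposite.op a • x ≠ 0}
    ⟨1, x₀, by simpa using hx₀⟩
  -- since `Q = Q J`, some `j ∈ J` has `Q j a ≠ 0`
  obtain ⟨j, hj, z, hz⟩ : ∃ j ∈ Ring.jacobson A, ∃ z : Q, MulOpposite.op (j * a) • z ≠ 0 := by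
    by_contra! h
    apply hx
    have hx' : x ∈ opJacobson A • (⊤ : Submodule Aᵐᵒᵖ Q) := by
      rw [hQ]; exact mem_top
    refine Submodule.smul_induction_on hx' (fun i hi n _ => ?_) (fun y z hy hz => ?_)
    · rw [smul_smul]
      exact h i.unop (op_mem_opJacobson.1 hi) n
    · rw [smul_add, hy, hz, add_zero]
  obtain ⟨b, hb⟩ := mem_span_singleton.1 (hmin (j * a) ⟨z, hz⟩
    (smul_mem _ j (mem_span_singleton_self a)))
  -- `a = b j a` with `1 - b j` left invertible
  rw [← Ideal.jacobson_bot, Ideal.mem_jacobson_iff] at hj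
  obtain ⟨c, hc⟩ := hj (-b)
  rw [Submodule.mem_bot] at hc
  have ha : a = 0 := by
    have hb' : b * (j * a) = a := hb
    calc a = -((c * -b * j + c - 1) * a) + (c * a - c * (b * (j * a))) := by noncomm_ring
      _ = 0 := by rw [hc, hb']; simp
  exact hx (by simp [ha])

end Perfect

section Distributive

variable {R : Type u} [Ring R]

lemma IsDistributiveModule.submodule {M : Type u} [AddCommGroup M] [Module R M]
    (hM : IsDistributiveModule R M) (N : Submodule R M) : IsDistributiveModule R N := by
  intro X Y Z
  have hinj := N.injective_subtype
  apply Submodule.map_injective_of_injective hinj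
  simp only [Submodule.map_inf _ hinj, Submodule.map_sup]
  exact hM _ _ _

lemma IsDistributiveModule.quotient {M : Type u} [AddCommGroup M] [Module R M]
    (hM : IsDistributiveModule R M) (N : Submodule R M) : IsDistributiveModule R (M ⧸ N) := by
  intro X Y Z
  have hs := N.mkQ_surjective
  have h := congrArg (Submodule.map N.mkQ) (hM (X.comap N.mkQ) (Y.comap N.mkQ) (Z.comap N.mkQ))
  simp only [Submodule.map_sup, ← Submodule.comap_inf,
    Submodule.map_comap_eq_of_surjective hs] at h
  rw [← h]
  refine le_antisymm ?_ ?_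
  · rintro x ⟨hx, hyz⟩
    obtain ⟨y, hy, z, hz, rfl⟩ := mem_sup.1 hyz
    obtain ⟨y, rfl⟩ := hs y
    obtain ⟨z, rfl⟩ := hs z
    rw [← map_add] at hx ⊢
    exact mem_map_of_mem ⟨hx, add_mem (mem_sup_left hy) (mem_sup_right hz)⟩
  · rintro _ ⟨w, ⟨hx, hw⟩, rfl⟩
    obtain ⟨y, hy, z, hz, rfl⟩ := mem_sup.1 hw
    refine ⟨hx, ?_⟩
    rw [map_add]
    exact add_mem (mem_sup_left hy) (mem_sup_right hz)

/-- In a distributive module there are no nonzero homomorphisms between disjoint cyclic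
submodules; this is the case of the homomorphism `x ↦ y`. -/
lemma IsDistributiveModule.eq_zero_of_disjoint {D : Type u} [AddCommGroup D] [Module R D]
    (hD : IsDistributiveModule R D) {x y : D} (hxy : Disjoint (span R {x}) (span R {y}))
    (hann : ∀ r : R, r • x = 0 → r • y = 0) : y = 0 := by
  rw [Submodule.disjoint_def] at hxy
  have hx := mem_span_singleton_self (R := R) x
  have hy := mem_span_singleton_self (R := R) y
  -- the graph `R (x + y)` meets `R y` trivially, hence is contained in `R x`
  have h := hD (span R {x + y}) (span R {x}) (span R {y})
  have h1 : span R {x + y} ⊓ span R {y} = ⊥ := by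
    rw [eq_bot_iff]
    rintro _ ⟨h1, h2⟩
    obtain ⟨r, rfl⟩ := mem_span_singleton.1 h1
    have hrx : r • x = 0 := by
      refine hxy _ (smul_mem _ _ hx) ?_
      have := sub_mem h2 (smul_mem _ r hy)
      rwa [smul_add, add_sub_cancel_right] at this
    simp [smul_add, hrx, hann r hrx]
  rw [h1, sup_bot_eq] at h
  have h2 : x + y ∈ span R {x + y} ⊓ (span R {x} ⊔ span R {y}) :=
    ⟨mem_span_singleton_self _, add_mem (mem_sup_left hx) (mem_sup_right hy)⟩
  rw [h] at h2
  refine hxy y ?_ hy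
  have := sub_mem h2.2 hx
  rwa [add_sub_cancel_left] at this

/-- A distributive module killed by an ideal with semisimple quotient ring is cyclic: any element
whose annihilator is minimal generates it. -/
lemma IsDistributiveModule.exists_span_eq_top (I : Ideal R) [I.IsTwoSided]
    [IsSemisimpleRing (R ⧸ I)] {D : Type u} [AddCommGroup D] [Module R D]
    (hD : IsDistributiveModule R D) (hI : Module.IsTorsionBySet R D I) :
    ∃ x : D, span R {x} = ⊤ := by
  have hss : IsSemisimpleModule R D := by
    let _ := hI.module
    exact hI.isSemisimpleModule_iff.1 inferInstance
  -- annihilators of elements, seen as left ideals of the Artinian ring `R ⧸ I`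
  let _ := hI.module
  let ann : D → Ideal (R ⧸ I) := fun x => LinearMap.ker (LinearMap.toSpanSingleton (R ⧸ I) D x)
  have hann : ∀ x r, Ideal.Quotient.mk I r ∈ ann x ↔ r • x = 0 := fun x r => Iff.rfl
  obtain ⟨x, -, hx⟩ := (InvImage.wf ann (wellFounded_lt (α := Ideal (R ⧸ I)))).has_min
    Set.univ ⟨0, trivial⟩
  refine ⟨x, ?_⟩
  obtain ⟨K, hK⟩ := exists_isCompl (span R {x})
  have hKbot : K = ⊥ := by
    rw [Submodule.eq_bot_iff]
    intro y hy
    have hdis : Disjoint (span R {x}) (span R {y}) :=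
      hK.disjoint.mono_right ((span_singleton_le_iff_mem _ _).2 hy)
    refine hD.eq_zero_of_disjoint hdis fun r hr => ?_
    rw [Submodule.disjoint_def] at hdis
    have hle : ∀ s : R, s • (x + y) = 0 → s • x = 0 ∧ s • y = 0 := by
      intro s hs
      have h0 : s • x = 0 := by
        refine hdis _ (smul_mem _ _ (mem_span_singleton_self _)) ?_
        rw [smul_add, add_eq_zero_iff_eq_neg] at hs
        rw [hs]
        exact neg_mem (smul_mem _ _ (mem_span_singleton_self _))
      refine ⟨h0, ?_⟩
      rwa [smul_add, h0, zero_add] at hs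
    have hle' : ann (x + y) ≤ ann x := by
      intro b
      obtain ⟨s, rfl⟩ := Ideal.Quotient.mk_surjective b
      rw [hann, hann]
      exact fun hs => (hle s hs).1
    have heq : ann x ≤ ann (x + y) := by
      by_contra hne
      exact hx (x + y) trivial (lt_of_le_not_ge hle' hne)
    exact (hle r ((hann _ _).1 (heq ((hann _ _).2 hr)))).2
  have := hK.sup_eq_top
  rwa [hKbot, sup_bot_eq] at this

end Distributive

lemma exists_span_eq_top_of_isDistributiveModule {A : Type u} [Ring A] (hA : MinPrincipalLeft A)
    (M : Type u) [AddCommGroup M] [Module Aᵐᵒᵖ M] (hM : IsDistributiveModule Aᵐᵒᵖ M) :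
    ∃ m : M, span Aᵐᵒᵖ {m} = ⊤ := by
  have := isSemisimpleRing_quotient_opJacobson hA
  set MJ : Submodule Aᵐᵒᵖ M := opJacobson A • ⊤ with hMJ
  obtain ⟨x, hx⟩ := (hM.quotient MJ).exists_span_eq_top (opJacobson A)
    ((Module.isTorsionBySet_quotient_iff MJ _).2 fun m r hr => smul_mem_smul hr mem_top)
  obtain ⟨m, rfl⟩ := MJ.mkQ_surjective x
  refine ⟨m, ?_⟩
  have hsup : MJ ⊔ span Aᵐᵒᵖ {m} = ⊤ := by
    rw [← Set.image_singleton, ← Submodule.map_span] at hx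
    rw [← Submodule.comap_map_mkQ, hx, Submodule.comap_top]
  apply Submodule.Quotient.subsingleton_iff.1
  refine subsingleton_of_smul_top_eq_top hA _ ?_
  have h := congrArg (Submodule.map (span Aᵐᵒᵖ {m}).mkQ) hsup
  rwa [Submodule.map_sup, Submodule.mkQ_map_self, sup_bot_eq, hMJ, Submodule.map_smul'',
    Submodule.map_top, Submodule.range_mkQ] at h

theorem stmt14 (A : Type u) [Ring A] (hA : MinPrincipalLeft A)
    (M : Type u) [AddCommGroup M] [Module Aᵐᵒᵖ M] (hM : IsDistributiveModule Aᵐᵒᵖ M) :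
    IsCompletelyCyclic Aᵐᵒᵖ M ∧ IsNoetherian Aᵐᵒᵖ M := by
  have hcyc : IsCompletelyCyclic Aᵐᵒᵖ M := by
    intro N
    obtain ⟨m, hm⟩ := exists_span_eq_top_of_isDistributiveModule hA N (hM.submodule N)
    refine ⟨m, ?_⟩
    have h := congrArg (Submodule.map N.subtype) hm
    rw [Submodule.map_span, Set.image_singleton, Submodule.map_subtype_top] at h
    exact h.symm
  refine ⟨hcyc, ⟨fun N => ?_⟩⟩
  obtain ⟨m, rfl⟩ := hcyc N
  exact fg_span_singleton m
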